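/- arXiv:2405.16752 — 3 statements merged into one kernel-verified Lean document; each statement's English description precedes it below -/
import Mathlib

section
/- Let D be a distribution over X × ℝ^d with ‖y‖_∞ ≤ M almost surely. Let h : X → ℝ^d be a model and π_h : X → [0,1]^d its induced policy, and suppose h is α-self-consistent (α-consistent with respect to π_h) for the bucketing T of width w = √(α/M). Then the expected self-evaluation of h is close to its expected payoff: |E_D[π_h(x)·h(x)] − E_D[π_h(x)·y]| ≤ 2d√(αM). -/
open MeasureTheory ProbabilityTheory

/-!
Everything reduces to a single coordinate `i`, where `f = πh · i` takes values in `[0,1]` and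
`g = y i - h i` is bounded by `2M`. On the level set of a bucket, replace `f` by the bucket
midpoint. The replacement costs at most `w / 2 * 2M` times the probability of the level set, hence
`w * M` in total, and what remains is at most `α` per bucket by consistency, hence `N * α` in total.
With `w = √(α / M)` and `N = 1 / w` both contributions equal `√(αM)`
(`abs_integral_mul_le_of_buckets`), and summing over the `d` coordinates gives the bound.
-/

/-- The one-coordinate estimate. Only diameter information about the buckets is available, so the
midpoints are clamped to `[0,1]`; this does not move them away from any value of `f`. -/
lemma abs_integral_mul_le_of_buckets {Z : Type*} [MeasurableSpace Z]
    (μ : Measure Z) [IsProbabilityMeasure μ] (M α w : ℝ) (N : ℕ)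
    (T : Fin N → Set ℝ) (mid : Fin N → ℝ)
    (hcover : Set.Icc (0 : ℝ) 1 ⊆ ⋃ b, T b)
    (hdisj : Pairwise (Function.onFun Disjoint T))
    (hmid : ∀ b, ∀ v ∈ T b, |v - mid b| ≤ w / 2)
    (hTmeas : ∀ b, MeasurableSet (T b))
    (f g : Z → ℝ) (hf : Measurable f) (hf01 : ∀ z, f z ∈ Set.Icc (0 : ℝ) 1)
    (hg : Integrable g μ) (hgM : ∀ᵐ z ∂μ, |g z| ≤ 2 * M)
    (hcons : ∀ b, |∫ z in f ⁻¹' T b, g z ∂μ| ≤ α) :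
    |∫ z, f z * g z ∂μ| ≤ N * α + w * M := by
  have hfg : Integrable (fun z => f z * g z) μ := by
    refine hg.bdd_mul hf.aestronglyMeasurable (c := 1) (ae_of_all _ fun z => ?_)
    rw [Real.norm_eq_abs, abs_of_nonneg (hf01 z).1]
    exact (hf01 z).2
  have hSm : ∀ b, MeasurableSet (f ⁻¹' T b) := fun b => hf (hTmeas b)
  have hSd : Pairwise (Function.onFun Disjoint fun b => f ⁻¹' T b) :=
    fun a b hab => (hdisj hab).preimage f
  have hSu : (⋃ b, f ⁻¹' T b) = Set.univ := by
    rw [← Set.preimage_iUnion, Set.eq_univ_iff_forall]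
    exact fun z => hcover (hf01 z)
  have hsum : ∑ b, μ.real (f ⁻¹' T b) = 1 := by
    have := integral_iUnion_fintype (μ := μ) (f := fun _ => (1 : ℝ)) hSm hSd
      (fun b => (integrable_const _).integrableOn)
    simpa [hSu] using this.symm
  have hsplit : ∫ z, f z * g z ∂μ = ∑ b, ∫ z in f ⁻¹' T b, f z * g z ∂μ := by
    rw [← integral_iUnion_fintype hSm hSd (fun b => hfg.integrableOn), hSu, setIntegral_univ]
  have hb : ∀ b, |∫ z in f ⁻¹' T b, f z * g z ∂μ| ≤ α + w * M * μ.real (f ⁻¹' T b) := by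
    intro b
    obtain ⟨c, hc0, hc1, hc⟩ : ∃ c : ℝ, 0 ≤ c ∧ c ≤ 1 ∧
        ∀ v ∈ T b, v ∈ Set.Icc (0 : ℝ) 1 → |v - c| ≤ w / 2 := by
      refine ⟨max 0 (min 1 (mid b)), le_max_left _ _, by simp, fun v hv hv01 => ?_⟩
      have h1 := abs_le.1 (hmid b v hv)
      obtain ⟨h2, h3⟩ := hv01
      rw [abs_le]
      rcases max_cases 0 (min 1 (mid b)) with h4 | h4 <;>
        rcases min_cases 1 (mid b) with h5 | h5 <;> constructor <;> linarith
    have hcg : Integrable (fun z => c * g z) μ := hg.const_mul c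
    have hdec : ∫ z in f ⁻¹' T b, f z * g z ∂μ
        = c * (∫ z in f ⁻¹' T b, g z ∂μ) + ∫ z in f ⁻¹' T b, (f z * g z - c * g z) ∂μ := by
      rw [integral_sub hfg.integrableOn hcg.integrableOn, integral_const_mul]
      ring
    have herr : |∫ z in f ⁻¹' T b, (f z * g z - c * g z) ∂μ| ≤ w * M * μ.real (f ⁻¹' T b) := by
      rw [← Real.norm_eq_abs]
      refine norm_setIntegral_le_of_norm_le_const_ae' (measure_lt_top _ _) ?_
      filter_upwards [hgM] with z hz hzb
      have h1 := hc (f z) hzb (hf01 z)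
      rw [← sub_mul, Real.norm_eq_abs, abs_mul]
      calc |f z - c| * |g z| ≤ w / 2 * (2 * M) :=
            mul_le_mul h1 hz (abs_nonneg _) ((abs_nonneg _).trans h1)
        _ = w * M := by ring
    have hmain : |c * ∫ z in f ⁻¹' T b, g z ∂μ| ≤ α := by
      rw [abs_mul, abs_of_nonneg hc0]
      exact (mul_le_of_le_one_left (abs_nonneg _) hc1).trans (hcons b)
    rw [hdec]
    exact (abs_add_le _ _).trans (add_le_add hmain herr)
  calc |∫ z, f z * g z ∂μ| ≤ ∑ b, |∫ z in f ⁻¹' T b, f z * g z ∂μ| := by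
        rw [hsplit]; exact Finset.abs_sum_le_sum_abs _ _
    _ ≤ ∑ b, (α + w * M * μ.real (f ⁻¹' T b)) := Finset.sum_le_sum fun b _ => hb b
    _ = N * α + w * M := by
        rw [Finset.sum_add_distrib, ← Finset.mul_sum, hsum]; simp

/-- Removes the normalization of the conditional measure. This also covers `μ S = 0`, where both
sides vanish. -/
lemma toReal_mul_norm_integral_cond {Z E : Type*} [MeasurableSpace Z] [NormedAddCommGroup E]
    [NormedSpace ℝ E] (μ : Measure Z) [IsProbabilityMeasure μ] (S : Set Z) (F : Z → E) :
    (μ S).toReal * ‖∫ z, F z ∂(μ[|S])‖ = ‖∫ z in S, F z ∂μ‖ := by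
  rw [ProbabilityTheory.cond, integral_smul_measure, norm_smul, ENNReal.toReal_inv, norm_inv,
    Real.norm_eq_abs, abs_of_nonneg ENNReal.toReal_nonneg]
  by_cases h0 : μ S = 0
  · simp [h0, Measure.restrict_eq_zero.2 h0]
  · have : (μ S).toReal ≠ 0 := ENNReal.toReal_ne_zero.2 ⟨h0, measure_ne_top _ _⟩
    field_simp

/-- If a model `h` is `α`-self-consistent, i.e. `α`-consistent with respect to the level
sets of its own induced policy `πh` (the policy maximizing predicted payoff `a · h(x)`
over the feasible set `Ω`), for a bucketing `T` of `[0,1]` into buckets of width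
`w = √(α/M)`, then its expected self-evaluation is close to its expected payoff:
`|E[πh(x)·h(x)] − E[πh(x)·y]| ≤ 2d√(αM)`. -/
theorem self_consistent_self_evaluation
    {X : Type*} [MeasurableSpace X] {d : ℕ}
    (D : Measure (X × (Fin d → ℝ))) [IsProbabilityMeasure D]
    (M α w : ℝ) (hM : 0 < M) (hα : 0 < α)
    (hw : w = Real.sqrt (α / M)) (hw1 : w ≤ 1)
    (N : ℕ) (hNw : (N : ℝ) * w = 1)
    (T : Fin N → Set ℝ) (mid : Fin N → ℝ)
    (hcover : Set.Icc (0 : ℝ) 1 ⊆ ⋃ b, T b)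
    (hdisj : Pairwise (Function.onFun Disjoint T))
    (hmid : ∀ b, ∀ v ∈ T b, |v - mid b| ≤ w / 2)
    (hTmeas : ∀ b, MeasurableSet (T b))
    (Ω : Set (Fin d → ℝ)) (hΩ : ∀ a ∈ Ω, ∀ i, a i ∈ Set.Icc (0 : ℝ) 1)
    (h : X → Fin d → ℝ) (hmeas : Measurable h)
    (hhbd : ∀ x, ‖h x‖ ≤ M) (hybd : ∀ᵐ p ∂D, ‖p.2‖ ≤ M)
    (πh : X → Fin d → ℝ) (hπmeas : Measurable πh)
    (hfeas : ∀ x, πh x ∈ Ω)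
    (hopt : ∀ x, ∀ a ∈ Ω, (∑ i, a i * h x i) ≤ ∑ i, πh x i * h x i)
    (hcons : ∀ (i : Fin d) (b : Fin N),
      (D {p | πh p.1 i ∈ T b}).toReal
        * ‖∫ p, (p.2 - h p.1) ∂(D[|{p : X × (Fin d → ℝ) | πh p.1 i ∈ T b}])‖ ≤ α) :
    |(∫ p, (∑ i, πh p.1 i * h p.1 i) ∂D) - (∫ p, (∑ i, πh p.1 i * p.2 i) ∂D)|
      ≤ 2 * d * Real.sqrt (α * M) := by
  have hyi : Integrable (fun p : X × (Fin d → ℝ) => p.2) D :=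
    Integrable.of_bound measurable_snd.aestronglyMeasurable M hybd
  have hhi : Integrable (fun p : X × (Fin d → ℝ) => h p.1) D :=
    Integrable.of_bound (hmeas.comp measurable_fst).aestronglyMeasurable M
      (ae_of_all _ fun p => hhbd p.1)
  have hπ01 : ∀ x i, πh x i ∈ Set.Icc (0 : ℝ) 1 := fun x i => hΩ _ (hfeas x) i
  have hfm : ∀ i, Measurable fun p : X × (Fin d → ℝ) => πh p.1 i := fun i =>
    (measurable_pi_apply i).comp (hπmeas.comp measurable_fst)
  have hbdd : ∀ (i : Fin d) (u : X × (Fin d → ℝ) → ℝ), Integrable u D →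
      Integrable (fun p => πh p.1 i * u p) D := by
    intro i u hu
    refine hu.bdd_mul (hfm i).aestronglyMeasurable (c := 1) (ae_of_all _ fun p => ?_)
    rw [Real.norm_eq_abs, abs_of_nonneg (hπ01 _ i).1]
    exact (hπ01 _ i).2
  -- The width `√(α / M)` balances the consistency error `N * α` and the rounding error `w * M`.
  have hwM : w * M = Real.sqrt (α * M) := by
    rw [hw, eq_comm, Real.sqrt_eq_iff_mul_self_eq (by positivity) (by positivity)]
    have := Real.mul_self_sqrt (show 0 ≤ α / M by positivity)
    symm
    calc Real.sqrt (α / M) * M * (Real.sqrt (α / M) * M)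
        = (Real.sqrt (α / M) * Real.sqrt (α / M)) * M * M := by ring
      _ = α * M := by rw [this]; field_simp
  have hNα : N * α = Real.sqrt (α * M) := by
    have hww : w * w * M = α := by
      rw [hw, Real.mul_self_sqrt (by positivity)]; field_simp
    calc N * α = (N * w) * (w * M) := by rw [← hww]; ring
      _ = Real.sqrt (α * M) := by rw [hNw, one_mul, hwM]
  have hcoord : ∀ i : Fin d,
      |∫ p, πh p.1 i * (p.2 - h p.1) i ∂D| ≤ 2 * Real.sqrt (α * M) := by
    intro i
    have key := abs_integral_mul_le_of_buckets D M α w N T mid hcover hdisj hmid hTmeas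
      (fun p => πh p.1 i) (fun p => (p.2 - h p.1) i) (hfm i) (fun p => hπ01 _ i)
      ((hyi.sub hhi).eval i) ?_ ?_
    · rw [hNα, hwM] at key
      linarith
    · filter_upwards [hybd] with p hp
      calc |(p.2 - h p.1) i| ≤ ‖p.2 - h p.1‖ := norm_le_pi_norm (p.2 - h p.1) i
        _ ≤ ‖p.2‖ + ‖h p.1‖ := norm_sub_le _ _
        _ ≤ 2 * M := by linarith [hhbd p.1]
    · intro b
      have h1 := hcons i b
      rw [toReal_mul_norm_integral_cond] at h1
      refine le_trans ?_ h1
      have h2 := norm_le_pi_norm (∫ p in {p : X × (Fin d → ℝ) | πh p.1 i ∈ T b},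
        (p.2 - h p.1) ∂D) i
      rw [eval_integral (f := fun p : X × (Fin d → ℝ) => p.2 - h p.1)
        (fun j => ((hyi.sub hhi).eval j).integrableOn)] at h2
      exact h2
  have hdiff : (∫ p, (∑ i, πh p.1 i * h p.1 i) ∂D) - (∫ p, (∑ i, πh p.1 i * p.2 i) ∂D)
      = -∑ i, ∫ p, πh p.1 i * (p.2 - h p.1) i ∂D := by
    rw [integral_finsetSum _ fun i _ => hbdd i _ (hhi.eval i),
      integral_finsetSum _ fun i _ => hbdd i _ (hyi.eval i), ← Finset.sum_sub_distrib,
      ← Finset.sum_neg_distrib]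
    refine Finset.sum_congr rfl fun i _ => ?_
    rw [← integral_sub (hbdd i _ (hhi.eval i)) (hbdd i _ (hyi.eval i)), ← integral_neg]
    refine integral_congr_ae (ae_of_all _ fun p => ?_)
    simp only [Pi.sub_apply]
    ring
  rw [hdiff, abs_neg]
  calc |∑ i, ∫ p, πh p.1 i * (p.2 - h p.1) i ∂D|
      ≤ ∑ i, |∫ p, πh p.1 i * (p.2 - h p.1) i ∂D| := Finset.abs_sum_le_sum_abs _ _
    _ ≤ ∑ _i : Fin d, 2 * Real.sqrt (α * M) := Finset.sum_le_sum fun i _ => hcoord i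
    _ = 2 * d * Real.sqrt (α * M) := by simp; ring
end

section
/- Let D be a distribution over X × ℝ^d with ‖y‖_∞ ≤ M almost surely. Let h_1, …, h_k : X → ℝ^d be k models with associated policies π_1, …, π_k : X → [0,1]^d, and let i* : X → [k] be a measurable selector with π_{i*(x)}(x)·h_{i*(x)}(x) ≥ π_j(x)·h_j(x) for all j ∈ [k] and all x; let the ensemble policy be π_𝐡(x) = π_{i*(x)}(x). Suppose for every i, l ∈ [k], every coordinate j ∈ [d], and every bucket τ in the bucketing T of width w = √(αk/M), the model h_i is α-consistent with respect to the event {x : π_i(x)_j ∈ τ and i*(x) = l}. Then the ensemble's expected payoff is at least the expected pointwise-maximum self-assessed payoff of the constituent models, up to error: E_D[π_𝐡(x)·y] ≥ E_D[max_{j ∈ [k]} π_j(x)·h_j(x)] − 2d√(αkM). -/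
/-!
Write `g l = y - h l` for the residual of model `l`. Since `i*` attains the pointwise maximum, the
claim is that `E[π_{i*}(x) · g_{i*}] ≥ -2d√(αkM)`, and this is proved one coordinate `j` at a time.
The events `E l b = {π_l(x)_j ∈ T b, i*(x) = l}` partition the space. On `E l b`, replacing
`π_l(x)_j` by the midpoint of bucket `b` costs at most `(w / 2) * 2M = wM`, and after the
replacement the contribution of the event is a constant in `[0, 1]` times `∫_{E l b} (g l)_j`, which
is at least `-α` by consistency. Summing over the `kN` events gives the error `kNα + wM` per
coordinate, and both terms equal `√(αkM)` for `w = √(αk/M)`, `N = 1/w`.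

The midpoints are only assumed to be `w / 2`-close to the points of their bucket, so they are first
clamped to `[0, 1]`; this does not increase the distance to values of a policy.
-/

open MeasureTheory ProbabilityTheory

/-- Consistency on an event bounds each coordinate of the unnormalized integral over that event. -/
lemma abs_setIntegral_coord_le {Ω : Type*} [MeasurableSpace Ω] {d : ℕ} (μ : Measure Ω)
    [IsProbabilityMeasure μ] {s : Set Ω} {g : Ω → Fin d → ℝ}
    (hg : Integrable g μ) {α : ℝ}
    (hc : (μ s).toReal * ‖∫ p, g p ∂(μ[|s])‖ ≤ α) (j : Fin d) :
    |∫ p in s, g p j ∂μ| ≤ α := by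
  have hcoord : ∫ p in s, g p j ∂μ = (∫ p in s, g p ∂μ) j :=
    ((ContinuousLinearMap.proj (R := ℝ) (φ := fun _ : Fin d => ℝ) j).integral_comp_comm
      hg.integrableOn)
  have hle : |∫ p in s, g p j ∂μ| ≤ ‖∫ p in s, g p ∂μ‖ := by
    rw [hcoord]; exact norm_le_pi_norm (∫ p in s, g p ∂μ) j
  refine hle.trans ?_
  by_cases h0 : μ s = 0
  · rw [Measure.restrict_eq_zero.mpr h0]
    simpa [h0] using hc
  · have hpos : 0 < (μ s).toReal := ENNReal.toReal_pos h0 (measure_ne_top _ _)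
    rw [ProbabilityTheory.cond, integral_smul_measure, norm_smul, ENNReal.toReal_inv,
      Real.norm_of_nonneg (inv_nonneg.mpr hpos.le), ← mul_assoc,
      mul_inv_cancel₀ hpos.ne', one_mul] at hc
    exact hc

lemma abs_sub_clamp_le {v m : ℝ} (hv : v ∈ Set.Icc (0 : ℝ) 1) :
    |v - max 0 (min m 1)| ≤ |v - m| := by
  obtain ⟨h0, h1⟩ := hv
  rcases le_total m 1 with hm | hm <;> rcases le_total 0 m with hm' | hm'
  · simp [hm, hm']
  · rw [min_eq_left hm, max_eq_left hm', abs_of_nonneg (by linarith), abs_of_nonneg (by linarith)]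
    linarith
  · rw [min_eq_right hm, max_eq_right zero_le_one, abs_of_nonpos (by linarith),
      abs_of_nonpos (by linarith)]
    linarith
  · linarith

/-- Replacing a weight `v` by an approximation `c` changes a payoff `v * t` with `|t| ≤ 2M` by at
most `wM`. -/
lemma mul_sub_le_mul {v c t w M : ℝ} (hvc : |v - c| ≤ w / 2) (ht : |t| ≤ 2 * M) :
    c * t - w * M ≤ v * t := by
  have h1 : |(v - c) * t| ≤ w / 2 * (2 * M) := by
    rw [abs_mul]
    exact mul_le_mul hvc ht (abs_nonneg _) ((abs_nonneg _).trans hvc)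
  linarith [(abs_le.mp h1).1]

/-- White box ensemble performance: with bucket width `w = √(αk/M)`, if each constituent
model `h i` is `α`-consistent with respect to each event `{x | π i x j ∈ τ ∧ i*(x) = l}`,
then the ensemble policy's expected payoff is at least the expected pointwise-maximum
self-assessed payoff of the constituent models, minus `2d√(αkM)`. -/
theorem white_box_ensemble_pointwise_max
    {X : Type*} [MeasurableSpace X] {d k : ℕ}
    (D : Measure (X × (Fin d → ℝ))) [IsProbabilityMeasure D]
    (M α w : ℝ) (hM : 0 < M) (hα : 0 < α)
    (hw : w = Real.sqrt (α * k / M)) (hw1 : w ≤ 1)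
    (N : ℕ) (hNw : (N : ℝ) * w = 1)
    (T : Fin N → Set ℝ) (mid : Fin N → ℝ)
    (hcover : Set.Icc (0 : ℝ) 1 ⊆ ⋃ b, T b)
    (hdisj : Pairwise (Function.onFun Disjoint T))
    (hmid : ∀ b, ∀ v ∈ T b, |v - mid b| ≤ w / 2)
    (hTmeas : ∀ b, MeasurableSet (T b))
    (h : Fin k → X → Fin d → ℝ) (hmeas : ∀ i, Measurable (h i))
    (hhbd : ∀ i x, ‖h i x‖ ≤ M) (hybd : ∀ᵐ p ∂D, ‖p.2‖ ≤ M)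
    (π : Fin k → X → Fin d → ℝ) (hπmeas : ∀ i, Measurable (π i))
    (hπrange : ∀ i x j, π i x j ∈ Set.Icc (0 : ℝ) 1)
    (istar : X → Fin k) (histar : Measurable istar)
    (hsel : ∀ x (j : Fin k),
      (∑ i, π j x i * h j x i) ≤ ∑ i, π (istar x) x i * h (istar x) x i)
    (hcons : ∀ (i l : Fin k) (j : Fin d) (b : Fin N),
      (D {p | π i p.1 j ∈ T b ∧ istar p.1 = l}).toReal
        * ‖∫ p, (p.2 - h i p.1)
            ∂(D[|{p : X × (Fin d → ℝ) | π i p.1 j ∈ T b ∧ istar p.1 = l}])‖ ≤ α) :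
    (∫ p, (∑ i, π (istar p.1) p.1 i * p.2 i) ∂D)
      ≥ (∫ p, (⨆ j : Fin k, ∑ i, π j p.1 i * h j p.1 i) ∂D)
          - 2 * d * Real.sqrt (α * k * M) := by
  have hMw : Real.sqrt (α * k * M) = w * M := by
    have h1 : α * k * M = α * k / M * M ^ 2 := by field_simp
    rw [h1, Real.sqrt_mul' _ (sq_nonneg M), Real.sqrt_sq hM.le, hw]
  have hkα : α * k = w ^ 2 * M := by
    rw [hw, Real.sq_sqrt (by positivity)]; field_simp
  have hkN : (k : ℝ) * N * α = w * M := by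
    calc (k : ℝ) * N * α = N * (α * k) := by ring
      _ = N * w * (w * M) := by rw [hkα]; ring
      _ = w * M := by rw [hNw, one_mul]
  -- A selection along `istar` is measurable because `Fin k` is countable.
  have hcomp : ∀ f : Fin k → X → Fin d → ℝ, (∀ i, Measurable (f i)) →
      Measurable (fun x => f (istar x) x) := fun f hf =>
    (measurable_from_prod_countable_right (f := fun q : Fin k × X => f q.1 q.2) hf).comp
      (histar.prodMk measurable_id)
  have hπs : Measurable (fun p : X × (Fin d → ℝ) => π (istar p.1) p.1) :=
    (hcomp π hπmeas).comp measurable_fst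
  have hhs : Measurable (fun p : X × (Fin d → ℝ) => h (istar p.1) p.1) :=
    (hcomp h hmeas).comp measurable_fst
  have hπabs : ∀ i x j, ‖π i x j‖ ≤ 1 := fun i x j => by
    rw [Real.norm_of_nonneg (hπrange i x j).1]; exact (hπrange i x j).2
  have hgint : ∀ l, Integrable (fun p : X × (Fin d → ℝ) => p.2 - h l p.1) D := by
    intro l
    refine Integrable.of_bound (measurable_snd.sub
      ((hmeas l).comp measurable_fst)).aestronglyMeasurable (2 * M) ?_
    filter_upwards [hybd] with p hp
    linarith [norm_sub_le p.2 (h l p.1), hhbd l p.1]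
  have hyint : ∀ j, Integrable (fun p : X × (Fin d → ℝ) => π (istar p.1) p.1 j * p.2 j) D := by
    intro j
    refine Integrable.of_bound (((measurable_pi_apply j).comp hπs).mul
      ((measurable_pi_apply j).comp measurable_snd)).aestronglyMeasurable (1 * M) ?_
    filter_upwards [hybd] with p hp
    rw [norm_mul]
    exact mul_le_mul (hπabs _ _ _) ((norm_le_pi_norm _ j).trans hp) (norm_nonneg _) zero_le_one
  have hhint : ∀ j, Integrable
      (fun p : X × (Fin d → ℝ) => π (istar p.1) p.1 j * h (istar p.1) p.1 j) D := by
    intro j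
    refine Integrable.of_bound (((measurable_pi_apply j).comp hπs).mul
      ((measurable_pi_apply j).comp hhs)).aestronglyMeasurable (1 * M)
      (Filter.Eventually.of_forall fun p => ?_)
    rw [norm_mul]
    exact mul_le_mul (hπabs _ _ _) ((norm_le_pi_norm _ j).trans (hhbd _ _)) (norm_nonneg _)
      zero_le_one
  have hsup : ∀ p : X × (Fin d → ℝ), (⨆ j : Fin k, ∑ i, π j p.1 i * h j p.1 i)
      = ∑ i, π (istar p.1) p.1 i * h (istar p.1) p.1 i := by
    intro p
    have : Nonempty (Fin k) := ⟨istar p.1⟩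
    exact le_antisymm (ciSup_le (hsel p.1))
      (le_ciSup (f := fun j : Fin k => ∑ i, π j p.1 i * h j p.1 i)
        (Set.finite_range _).bddAbove (istar p.1))
  have hcoord : ∀ j, (∫ p, π (istar p.1) p.1 j * h (istar p.1) p.1 j ∂D) - 2 * (w * M)
      ≤ ∫ p, π (istar p.1) p.1 j * p.2 j ∂D := by
    intro j
    set E : Fin k → Fin N → Set (X × (Fin d → ℝ)) :=
      fun l b => {p | π l p.1 j ∈ T b ∧ istar p.1 = l} with hE
    set c : Fin N → ℝ := fun b => max 0 (min (mid b) 1) with hc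
    have hc01 : ∀ b, |c b| ≤ 1 := fun b => by
      rw [abs_of_nonneg (le_max_left _ _)]
      exact max_le zero_le_one (min_le_right _ _)
    have hEmeas : ∀ l b, MeasurableSet (E l b) := fun l b =>
      ((((measurable_pi_apply j).comp (hπmeas l)).comp measurable_fst) (hTmeas b)).inter
        ((histar.comp measurable_fst) (measurableSet_singleton l))
    have hint : ∀ l b, Integrable
        ((E l b).indicator fun p => c b * (p.2 j - h l p.1 j)) D := fun l b =>
      (((hgint l).eval j).const_mul (c b)).indicator (hEmeas l b)
    have hterm : ∀ l b, -α ≤ ∫ p, (E l b).indicator (fun p => c b * (p.2 j - h l p.1 j)) p ∂D := by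
      intro l b
      rw [integral_indicator (hEmeas l b), integral_const_mul]
      have h1 : |∫ p in E l b, (p.2 j - h l p.1 j) ∂D| ≤ α :=
        abs_setIntegral_coord_le D (hgint l) (hcons l l j b) j
      have h2 : |c b * ∫ p in E l b, (p.2 j - h l p.1 j) ∂D| ≤ 1 * α := by
        rw [abs_mul]
        exact mul_le_mul (hc01 b) h1 (abs_nonneg _) zero_le_one
      linarith [(abs_le.mp h2).1]
    have hpoint : ∀ᵐ p ∂D,
        (∑ l, ∑ b, (E l b).indicator (fun p => c b * (p.2 j - h l p.1 j)) p) - w * M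
          ≤ π (istar p.1) p.1 j * p.2 j - π (istar p.1) p.1 j * h (istar p.1) p.1 j := by
      filter_upwards [hybd] with p hp
      obtain ⟨b, hb⟩ := Set.mem_iUnion.mp (hcover (hπrange (istar p.1) p.1 j))
      -- Only the event of the selected model and of the bucket of its policy value contributes.
      have hsum : (∑ l, ∑ b, (E l b).indicator (fun p => c b * (p.2 j - h l p.1 j)) p)
          = c b * (p.2 j - h (istar p.1) p.1 j) := by
        rw [Finset.sum_eq_single (istar p.1), Finset.sum_eq_single b]
        · exact Set.indicator_of_mem (show p ∈ E (istar p.1) b from ⟨hb, rfl⟩) _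
        · intro b' _ hne
          refine Set.indicator_of_notMem (fun hmem => ?_) _
          exact Set.disjoint_left.mp (hdisj hne) hmem.1 hb
        · simp
        · intro l _ hne
          refine Finset.sum_eq_zero fun b' _ => Set.indicator_of_notMem (fun hmem => ?_) _
          exact hne hmem.2.symm
        · simp
      rw [hsum, ← mul_sub]
      refine mul_sub_le_mul ((abs_sub_clamp_le (hπrange _ _ _)).trans (hmid b _ hb)) ?_
      have h1 := (norm_le_pi_norm p.2 j).trans hp
      have h2 := (norm_le_pi_norm (h (istar p.1) p.1) j).trans (hhbd _ _)
      linarith [norm_sub_le (p.2 j) (h (istar p.1) p.1 j),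
        Real.norm_eq_abs (p.2 j - h (istar p.1) p.1 j)]
    have hsumint : Integrable (fun p =>
        ∑ l, ∑ b, (E l b).indicator (fun p => c b * (p.2 j - h l p.1 j)) p) D :=
      integrable_finsetSum _ fun l _ => integrable_finsetSum _ fun b _ => hint l b
    have hmono := integral_mono_ae (hsumint.sub (integrable_const (w * M)))
      ((hyint j).sub (hhint j)) hpoint
    simp only [Pi.sub_apply] at hmono
    rw [integral_sub hsumint (integrable_const _), integral_sub (hyint j) (hhint j),
      integral_finsetSum _ fun l _ => integrable_finsetSum _ fun b _ => hint l b] at hmono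
    simp only [integral_const, probReal_univ, one_smul] at hmono
    have hlow : -(w * M) ≤ ∑ l, ∫ p,
        ∑ b, (E l b).indicator (fun p => c b * (p.2 j - h l p.1 j)) p ∂D := by
      calc -(w * M) = ∑ _l : Fin k, ∑ _b : Fin N, -α := by
            simp only [Finset.sum_const, Finset.card_univ, Fintype.card_fin, nsmul_eq_mul]
            rw [← hkN]; ring
        _ ≤ _ := Finset.sum_le_sum fun l _ => by
            rw [integral_finsetSum _ fun b _ => hint l b]
            exact Finset.sum_le_sum fun b _ => hterm l b
    linarith
  simp only [hsup]
  rw [integral_finsetSum _ fun j _ => hyint j, integral_finsetSum _ fun j _ => hhint j, hMw]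
  have htot := Finset.sum_le_sum fun j (_ : j ∈ Finset.univ) => hcoord j
  rw [Finset.sum_sub_distrib] at htot
  simp only [Finset.sum_const, Finset.card_univ, Fintype.card_fin, nsmul_eq_mul] at htot
  linarith
end

section
/- Let D be a distribution over X × ℝ^d with ‖y‖_∞ ≤ M almost surely. Let h_1, …, h_k : X → ℝ^d be k models with associated policies π_1, …, π_k : X → [0,1]^d, and let i* : X → [k] be a measurable selector with π_{i*(x)}(x)·h_{i*(x)}(x) ≥ π_j(x)·h_j(x) for all j ∈ [k] and all x; let the ensemble policy be π_𝐡(x) = π_{i*(x)}(x). Suppose for every i, l ∈ [k], every coordinate j ∈ [d], and every bucket τ in the bucketing T of width w = √(αk/M), the model h_i is α-consistent with respect to the event {x : π_i(x)_j ∈ τ and i*(x) = l}. Then the ensemble satisfies a swap-regret guarantee: for every function φ : [k] → [k], E_D[π_𝐡(x)·y] ≥ E_D[π_{φ(i*(x))}(x)·y] − 4d√(αkM). -/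
open MeasureTheory ProbabilityTheory

/-!
Write `πᵢ`, `hᵢ` for the policies and models. For any `ψ : [k] → [k]`, the true expected payoff of
the policy `x ↦ π_{ψ(i*(x))}(x)` and its expected self-assessed payoff differ by at most
`2d√(αkM)` (`payoff_sub_self_assessed_le`). Applying this to `ψ = id` and `ψ = φ`, and comparing
the two self-assessed payoffs pointwise by the choice of `i*`, gives the theorem.

The difference is a sum over coordinates `j` and over the level sets `{i* = l}` of
`∫_{i* = l} π_{ψ(l)}(x)_j (y_j - h_{ψ(l)}(x)_j)`. On a bucket the factor `π_{ψ(l)}(x)_j` is within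
`w / 2` of a constant in `[0, 1]`; the constant part is controlled by consistency and costs at most
`α` per bucket, while the remainder costs at most `(w / 2) · 2M` times the mass of the level set
(`abs_setIntegral_mul_le`). Summing over the `1 / w` buckets, the `k` level sets and the `d`
coordinates yields `d (kα / w + M w) = 2d√(αkM)` for `w = √(αk / M)`.
-/

/-- The bucketing estimate: if `f` takes values in `[0, 1]` and `g` has integral at most `α` in
absolute value over each piece of `S` on which `f` stays in one bucket, then `∫_S f g` is small. -/
lemma abs_setIntegral_mul_le {Ω : Type*} [MeasurableSpace Ω] (μ : Measure Ω) [IsFiniteMeasure μ]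
    {N : ℕ} {w α B : ℝ} (T : Fin N → Set ℝ) (mid : Fin N → ℝ)
    (hcover : Set.Icc (0 : ℝ) 1 ⊆ ⋃ b, T b)
    (hdisj : Pairwise (Function.onFun Disjoint T))
    (hmid : ∀ b, ∀ v ∈ T b, |v - mid b| ≤ w / 2)
    (hTmeas : ∀ b, MeasurableSet (T b))
    {f g : Ω → ℝ} (hf : Measurable f) (hf01 : ∀ x, f x ∈ Set.Icc (0 : ℝ) 1)
    (hg : Measurable g) (hgB : ∀ᵐ x ∂μ, |g x| ≤ B)
    {S : Set Ω} (hS : MeasurableSet S)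
    (hα : ∀ b, |∫ x in f ⁻¹' T b ∩ S, g x ∂μ| ≤ α) :
    |∫ x in S, f x * g x ∂μ| ≤ N * α + w / 2 * B * μ.real S := by
  have hgi : Integrable g μ := Integrable.of_bound hg.aestronglyMeasurable B hgB
  have hfgi : Integrable (fun x => f x * g x) μ := by
    refine hgi.bdd_mul (c := 1) hf.aestronglyMeasurable (Filter.Eventually.of_forall fun x => ?_)
    rw [Real.norm_eq_abs, abs_le]
    exact ⟨by linarith [(hf01 x).1], (hf01 x).2⟩
  have hUS : S = ⋃ b, (f ⁻¹' T b ∩ S) := by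
    ext x
    have := hcover (hf01 x)
    simp only [Set.mem_iUnion, Set.mem_inter_iff, Set.mem_preimage] at this ⊢
    exact ⟨fun hx => this.imp fun b hb => ⟨hb, hx⟩, fun ⟨_, _, hx⟩ => hx⟩
  have hPm : ∀ b, MeasurableSet (f ⁻¹' T b ∩ S) := fun b => (hf (hTmeas b)).inter hS
  have hPd : Pairwise (Function.onFun Disjoint fun b => f ⁻¹' T b ∩ S) := fun a b hab =>
    ((hdisj hab).preimage f).mono Set.inter_subset_left Set.inter_subset_left
  have hsplit : ∀ u : Ω → ℝ, Integrable u μ →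
      ∫ x in S, u x ∂μ = ∑ b, ∫ x in f ⁻¹' T b ∩ S, u x ∂μ := fun u hu => by
    conv_lhs => rw [hUS]
    exact integral_iUnion_fintype hPm hPd fun _ => hu.integrableOn
  have hpiece : ∀ b, |∫ x in f ⁻¹' T b ∩ S, f x * g x ∂μ|
      ≤ α + ∫ _ in f ⁻¹' T b ∩ S, w / 2 * B ∂μ := by
    intro b
    -- The midpoint of the bucket clamped to `[0, 1]`: nothing forces `mid b` itself to lie there.
    set c : ℝ := max 0 (min 1 (mid b)) with hc
    have hc0 : 0 ≤ c := le_max_left _ _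
    have hc1 : c ≤ 1 := max_le zero_le_one (min_le_left _ _)
    have hfc : ∀ x ∈ f ⁻¹' T b ∩ S, |f x - c| ≤ w / 2 := by
      intro x hx
      have h1 := abs_le.1 (hmid b _ hx.1)
      have h2 := hf01 x
      rw [Set.mem_Icc] at h2
      rw [abs_le, hc]
      rcases max_cases 0 (min 1 (mid b)) with h3 | h3 <;>
        rcases min_cases 1 (mid b) with h4 | h4 <;> constructor <;> linarith
    have hri : Integrable (fun x => (f x - c) * g x) μ := by
      simp only [sub_mul]
      exact hfgi.sub (hgi.const_mul c)
    have heq : ∫ x in f ⁻¹' T b ∩ S, f x * g x ∂μ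
        = c * (∫ x in f ⁻¹' T b ∩ S, g x ∂μ)
          + ∫ x in f ⁻¹' T b ∩ S, (f x - c) * g x ∂μ := by
      rw [← integral_const_mul, ← integral_add (hgi.const_mul c).integrableOn hri.integrableOn]
      congr 1; ext x; ring
    have h1 : |c * (∫ x in f ⁻¹' T b ∩ S, g x ∂μ)| ≤ α := by
      rw [abs_mul, abs_of_nonneg hc0]
      exact (mul_le_of_le_one_left (abs_nonneg _) hc1).trans (hα b)
    have h2 : |∫ x in f ⁻¹' T b ∩ S, (f x - c) * g x ∂μ|
        ≤ ∫ _ in f ⁻¹' T b ∩ S, w / 2 * B ∂μ := by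
      rw [← Real.norm_eq_abs]
      refine norm_integral_le_of_norm_le (integrable_const _) ?_
      filter_upwards [ae_restrict_of_ae hgB, ae_restrict_mem (hPm b)] with x hx hxP
      rw [Real.norm_eq_abs, abs_mul]
      exact mul_le_mul (hfc x hxP) hx (abs_nonneg _) ((abs_nonneg _).trans (hfc x hxP))
    rw [heq]
    exact (abs_add_le _ _).trans (add_le_add h1 h2)
  rw [hsplit _ hfgi]
  refine (Finset.abs_sum_le_sum_abs _ _).trans ((Finset.sum_le_sum fun b _ => hpiece b).trans ?_)
  rw [Finset.sum_add_distrib, ← hsplit _ (integrable_const _), setIntegral_const]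
  simp [mul_comm]

/-- Consistency on an event, phrased through the set integral rather than the conditional
expectation; a null event causes no exception. -/
lemma norm_setIntegral_le_of_cond {Ω E : Type*} [MeasurableSpace Ω] [NormedAddCommGroup E]
    [NormedSpace ℝ E] (μ : Measure Ω) [IsFiniteMeasure μ] (S : Set Ω) (u : Ω → E) {α : ℝ}
    (h : (μ S).toReal * ‖∫ x, u x ∂(μ[|S])‖ ≤ α) : ‖∫ x in S, u x ∂μ‖ ≤ α := by
  rw [ProbabilityTheory.cond, integral_smul_measure, norm_smul, ENNReal.toReal_inv,
    norm_inv, Real.norm_of_nonneg ENNReal.toReal_nonneg] at h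
  rcases eq_or_ne (μ S) 0 with h0 | h0
  · rw [h0] at h
    rw [Measure.restrict_eq_zero.2 h0]
    simpa using h
  · rwa [mul_inv_cancel_left₀ (ENNReal.toReal_ne_zero.2 ⟨h0, measure_ne_top _ _⟩)] at h

/-- For every relabelling `ψ` of the selector, the policy `x ↦ π_{ψ(i*(x))}(x)` has true and
self-assessed expected payoffs within `2d√(αkM)` of each other. -/
lemma payoff_sub_self_assessed_le
    {X : Type*} [MeasurableSpace X] {d k : ℕ}
    (D : Measure (X × (Fin d → ℝ))) [IsProbabilityMeasure D]
    (M α w : ℝ) (hM : 0 < M) (hα : 0 < α)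
    (hw : w = Real.sqrt (α * k / M))
    (N : ℕ) (hNw : (N : ℝ) * w = 1)
    (T : Fin N → Set ℝ) (mid : Fin N → ℝ)
    (hcover : Set.Icc (0 : ℝ) 1 ⊆ ⋃ b, T b)
    (hdisj : Pairwise (Function.onFun Disjoint T))
    (hmid : ∀ b, ∀ v ∈ T b, |v - mid b| ≤ w / 2)
    (hTmeas : ∀ b, MeasurableSet (T b))
    (h : Fin k → X → Fin d → ℝ) (hmeas : ∀ i, Measurable (h i))
    (hhbd : ∀ i x, ‖h i x‖ ≤ M) (hybd : ∀ᵐ p ∂D, ‖p.2‖ ≤ M)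
    (π : Fin k → X → Fin d → ℝ) (hπmeas : ∀ i, Measurable (π i))
    (hπrange : ∀ i x j, π i x j ∈ Set.Icc (0 : ℝ) 1)
    (istar : X → Fin k) (histar : Measurable istar)
    (hcons : ∀ (i l : Fin k) (j : Fin d) (b : Fin N),
      (D {p | π i p.1 j ∈ T b ∧ istar p.1 = l}).toReal
        * ‖∫ p, (p.2 - h i p.1)
            ∂(D[|{p : X × (Fin d → ℝ) | π i p.1 j ∈ T b ∧ istar p.1 = l}])‖ ≤ α)
    (ψ : Fin k → Fin k) :
    Integrable (fun p : X × (Fin d → ℝ) =>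
      ∑ i, π (ψ (istar p.1)) p.1 i * h (ψ (istar p.1)) p.1 i) D ∧
    |(∫ p, (∑ i, π (ψ (istar p.1)) p.1 i * p.2 i) ∂D)
      - ∫ p, (∑ i, π (ψ (istar p.1)) p.1 i * h (ψ (istar p.1)) p.1 i) ∂D|
      ≤ 2 * d * Real.sqrt (α * k * M) := by
  have hselm : ∀ q : Fin k → X → Fin d → ℝ, (∀ i, Measurable (q i)) → ∀ j,
      Measurable fun p : X × (Fin d → ℝ) => q (ψ (istar p.1)) p.1 j := by
    intro q hq j
    have h1 : Measurable fun r : Fin k × X => q r.1 r.2 j :=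
      measurable_from_prod_countable_right fun i => (measurable_pi_apply j).comp (hq i)
    exact h1.comp (((measurable_of_finite ψ).comp (histar.comp measurable_fst)).prodMk
      measurable_fst)
  have hπ1 : ∀ i x j, ‖π i x j‖ ≤ 1 := fun i x j => by
    rw [Real.norm_eq_abs, abs_le]
    exact ⟨by linarith [(hπrange i x j).1], (hπrange i x j).2⟩
  have hhi : ∀ j, Integrable
      (fun p : X × (Fin d → ℝ) => π (ψ (istar p.1)) p.1 j * h (ψ (istar p.1)) p.1 j) D := by
    intro j
    refine Integrable.bdd_mul (c := 1) ?_ (hselm π hπmeas j).aestronglyMeasurable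
      (Filter.Eventually.of_forall fun p => hπ1 _ _ _)
    exact Integrable.of_bound (hselm h hmeas j).aestronglyMeasurable M
      (Filter.Eventually.of_forall fun p => (norm_le_pi_norm _ _).trans (hhbd _ _))
  have hyi : ∀ j, Integrable
      (fun p : X × (Fin d → ℝ) => π (ψ (istar p.1)) p.1 j * p.2 j) D := by
    intro j
    refine Integrable.bdd_mul (c := 1) ?_ (hselm π hπmeas j).aestronglyMeasurable
      (Filter.Eventually.of_forall fun p => hπ1 _ _ _)
    exact Integrable.of_bound
      ((measurable_pi_apply j).comp measurable_snd).aestronglyMeasurable M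
      (hybd.mono fun p hp => (norm_le_pi_norm _ _).trans hp)
  refine ⟨integrable_finsetSum _ fun j _ => hhi j, ?_⟩
  have hSm : ∀ l, MeasurableSet {p : X × (Fin d → ℝ) | istar p.1 = l} := fun l =>
    (histar.comp measurable_fst) (measurableSet_singleton l)
  have hSd : Pairwise (Function.onFun Disjoint
      fun l => {p : X × (Fin d → ℝ) | istar p.1 = l}) := fun a b hab =>
    Set.disjoint_left.2 fun p (hp : istar p.1 = a) (hq : istar p.1 = b) => hab (hp.symm.trans hq)
  have hSu : ⋃ l, {p : X × (Fin d → ℝ) | istar p.1 = l} = Set.univ :=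
    Set.eq_univ_of_forall fun p => Set.mem_iUnion.2 ⟨istar p.1, rfl⟩
  have hsplit : ∀ u : X × (Fin d → ℝ) → ℝ, Integrable u D →
      ∫ p, u p ∂D = ∑ l, ∫ p in {p : X × (Fin d → ℝ) | istar p.1 = l}, u p ∂D := fun u hu => by
    rw [← setIntegral_univ, ← hSu]
    exact integral_iUnion_fintype hSm hSd fun _ => hu.integrableOn
  have hmass : ∑ l, D.real {p : X × (Fin d → ℝ) | istar p.1 = l} = 1 := by
    have := hsplit (fun _ => 1) (integrable_const _)
    simpa using this.symm
  have hyh : ∀ i, ∀ᵐ p ∂D, ‖p.2 - h i p.1‖ ≤ 2 * M := fun i => hybd.mono fun p hp =>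
    (norm_sub_le _ _).trans (by linarith [hhbd i p.1])
  have hyhm : ∀ i, Measurable fun p : X × (Fin d → ℝ) => p.2 - h i p.1 := fun i =>
    measurable_snd.sub ((hmeas i).comp measurable_fst)
  have hlevel : ∀ (i l : Fin k) (j : Fin d),
      |∫ p in {p : X × (Fin d → ℝ) | istar p.1 = l}, π i p.1 j * (p.2 - h i p.1) j ∂D|
        ≤ N * α + w / 2 * (2 * M) * D.real {p : X × (Fin d → ℝ) | istar p.1 = l} := by
    intro i l j
    refine abs_setIntegral_mul_le D (f := fun p : X × (Fin d → ℝ) => π i p.1 j)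
      (g := fun p => (p.2 - h i p.1) j) T mid hcover hdisj hmid hTmeas
      ((measurable_pi_apply j).comp ((hπmeas i).comp measurable_fst))
      (fun p => hπrange _ _ _) ((measurable_pi_apply j).comp (hyhm i))
      ((hyh i).mono fun p hp => (norm_le_pi_norm _ j).trans hp) (hSm l) fun b => ?_
    have hint : Integrable (fun p : X × (Fin d → ℝ) => p.2 - h i p.1) D :=
      Integrable.of_bound (hyhm i).aestronglyMeasurable (2 * M) (hyh i)
    have h1 := norm_setIntegral_le_of_cond D _ _ (hcons i l j b)
    have h2 := (ContinuousLinearMap.proj (R := ℝ) (φ := fun _ : Fin d => ℝ) j).integral_comp_comm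
      (hint.integrableOn (s := {p | π i p.1 j ∈ T b ∧ istar p.1 = l}))
    refine le_trans ?_ ((norm_le_pi_norm _ j).trans h1)
    exact (congrArg abs h2).le
  have hcoord : ∀ j, |∫ p, (π (ψ (istar p.1)) p.1 j * p.2 j
      - π (ψ (istar p.1)) p.1 j * h (ψ (istar p.1)) p.1 j) ∂D| ≤ k * (N * α) + w * M := by
    intro j
    rw [hsplit (fun p => π (ψ (istar p.1)) p.1 j * p.2 j
      - π (ψ (istar p.1)) p.1 j * h (ψ (istar p.1)) p.1 j) ((hyi j).sub (hhi j))]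
    have heq : ∀ l, ∫ p in {p : X × (Fin d → ℝ) | istar p.1 = l},
        (π (ψ (istar p.1)) p.1 j * p.2 j
          - π (ψ (istar p.1)) p.1 j * h (ψ (istar p.1)) p.1 j) ∂D
        = ∫ p in {p : X × (Fin d → ℝ) | istar p.1 = l},
            π (ψ l) p.1 j * (p.2 - h (ψ l) p.1) j ∂D := fun l =>
      setIntegral_congr_fun (hSm l) fun p (hp : istar p.1 = l) => by
        simp only [hp, Pi.sub_apply, mul_sub]
    simp only [heq]
    refine (Finset.abs_sum_le_sum_abs _ _).trans
      ((Finset.sum_le_sum fun l _ => hlevel (ψ l) l j).trans ?_)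
    rw [Finset.sum_add_distrib, ← Finset.mul_sum Finset.univ _ (w / 2 * (2 * M)), hmass]
    simp only [Finset.sum_const, Finset.card_univ, Fintype.card_fin, nsmul_eq_mul]
    linarith
  have hwsq : w ^ 2 = α * k / M := by rw [hw, Real.sq_sqrt (by positivity)]
  have hw0 : 0 ≤ w := hw ▸ Real.sqrt_nonneg _
  have hwM : w * M = Real.sqrt (α * k * M) := by
    rw [eq_comm, Real.sqrt_eq_iff_mul_self_eq (by positivity) (by positivity)]
    have : w * M * (w * M) = w ^ 2 * M ^ 2 := by ring
    rw [this, hwsq]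
    field_simp
  -- `N = 1 / w`, so the `kN` consistency errors also add up to `w M`.
  have hNk : k * (N * α) = w * M := by
    have h1 : α * k = w ^ 2 * M := by rw [hwsq]; field_simp
    calc k * (N * α) = N * (α * k) := by ring
      _ = (N * w) * (w * M) := by rw [h1]; ring
      _ = w * M := by rw [hNw, one_mul]
  rw [integral_finsetSum _ fun j _ => hyi j, integral_finsetSum _ fun j _ => hhi j,
    ← Finset.sum_sub_distrib]
  refine (Finset.abs_sum_le_sum_abs _ _).trans ((Finset.sum_le_sum fun j _ => ?_).trans_eq
    (?_ : ∑ _j : Fin d, 2 * Real.sqrt (α * k * M) = _))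
  · rw [← integral_sub (hyi j) (hhi j)]
    refine (hcoord j).trans_eq ?_
    rw [hNk, hwM]; ring
  · simp; ring


/-- White box ensemble swap-regret guarantee: with bucket width `w = √(αk/M)`, if each
constituent model `h i` is `α`-consistent with respect to each event
`{x | π i x j ∈ τ ∧ i*(x) = l}`, then for every swap function `φ : [k] → [k]` the
ensemble policy's expected payoff is at least that of the policy `x ↦ π (φ (i* x)) x`,
minus `4d√(αkM)`. -/
theorem white_box_ensemble_swap_regret
    {X : Type*} [MeasurableSpace X] {d k : ℕ}
    (D : Measure (X × (Fin d → ℝ))) [IsProbabilityMeasure D]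
    (M α w : ℝ) (hM : 0 < M) (hα : 0 < α)
    (hw : w = Real.sqrt (α * k / M)) (hw1 : w ≤ 1)
    (N : ℕ) (hNw : (N : ℝ) * w = 1)
    (T : Fin N → Set ℝ) (mid : Fin N → ℝ)
    (hcover : Set.Icc (0 : ℝ) 1 ⊆ ⋃ b, T b)
    (hdisj : Pairwise (Function.onFun Disjoint T))
    (hmid : ∀ b, ∀ v ∈ T b, |v - mid b| ≤ w / 2)
    (hTmeas : ∀ b, MeasurableSet (T b))
    (h : Fin k → X → Fin d → ℝ) (hmeas : ∀ i, Measurable (h i))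
    (hhbd : ∀ i x, ‖h i x‖ ≤ M) (hybd : ∀ᵐ p ∂D, ‖p.2‖ ≤ M)
    (π : Fin k → X → Fin d → ℝ) (hπmeas : ∀ i, Measurable (π i))
    (hπrange : ∀ i x j, π i x j ∈ Set.Icc (0 : ℝ) 1)
    (istar : X → Fin k) (histar : Measurable istar)
    (hsel : ∀ x (j : Fin k),
      (∑ i, π j x i * h j x i) ≤ ∑ i, π (istar x) x i * h (istar x) x i)
    (hcons : ∀ (i l : Fin k) (j : Fin d) (b : Fin N),
      (D {p | π i p.1 j ∈ T b ∧ istar p.1 = l}).toReal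
        * ‖∫ p, (p.2 - h i p.1)
            ∂(D[|{p : X × (Fin d → ℝ) | π i p.1 j ∈ T b ∧ istar p.1 = l}])‖ ≤ α)
    (φ : Fin k → Fin k) :
    (∫ p, (∑ i, π (istar p.1) p.1 i * p.2 i) ∂D)
      ≥ (∫ p, (∑ i, π (φ (istar p.1)) p.1 i * p.2 i) ∂D)
          - 4 * d * Real.sqrt (α * k * M) := by
  obtain ⟨hi1, h1⟩ := payoff_sub_self_assessed_le D M α w hM hα hw N hNw T mid hcover hdisj hmid
    hTmeas h hmeas hhbd hybd π hπmeas hπrange istar histar hcons id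
  obtain ⟨hi2, h2⟩ := payoff_sub_self_assessed_le D M α w hM hα hw N hNw T mid hcover hdisj hmid
    hTmeas h hmeas hhbd hybd π hπmeas hπrange istar histar hcons φ
  have h3 := integral_mono hi2 hi1 fun p => hsel p.1 (φ (istar p.1))
  simp only [id] at h1 h3
  have h4 := (abs_le.1 h1).1
  have h5 := (abs_le.1 h2).2
  linarith
end
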